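/- arXiv:math/0608037 — 5 statements merged into one kernel-verified Lean document; each statement's English description precedes it below -/
import Mathlib

section
/- (Hopf boundary point lemma for parabolic systems.) Assume the setting below, together with Requirement 1 and Requirement 2. If the value f(t,x) lies outside of W for some (t,x) ∈ (0,T] × M, then there exists a maximal distance pair (t₀,x₀) ∈ (0,T) × ∂M such that ⟨λ(f(t₀,x₀)), D_x f(t₀,x₀)[ν(x₀)]⟩ > 0, where D_x f(t₀,x₀)[ν(x₀)] denotes the spatial derivative (taken within M) of the map y ↦ f(t₀,y) at x₀ applied to the vector ν(x₀), and λ(v) = v − ω(v) with ω(v) the metric projection of v onto W. -/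
open scoped RealInnerProductSpace

/-- `lam` is a supporting vector for `W` at `ω`: it is a unit vector with
`⟪lam, σ⟫ ≤ ⟪lam, ω⟫` for all `σ ∈ W`. -/
def IsSupportingVector {m : ℕ} (W : Set (EuclideanSpace ℝ (Fin m)))
    (ω lam : EuclideanSpace ℝ (Fin m)) : Prop :=
  ‖lam‖ = 1 ∧ ∀ σ ∈ W, ⟪lam, σ⟫ ≤ ⟪lam, ω⟫

lemma aux_1d {G G' : ℝ → ℝ} {ε c : ℝ} (hε : 0 < ε)
    (h1 : ∀ u ∈ Set.Icc (0 : ℝ) ε, HasDerivWithinAt G (G' u) (Set.Icc 0 ε) u)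
    (h2 : HasDerivWithinAt G' c (Set.Icc 0 ε) 0)
    (hmax : ∀ u ∈ Set.Icc (0 : ℝ) ε, G u ≤ G 0) :
    G' 0 ≤ 0 ∧ (G' 0 = 0 → c ≤ 0) := by
  have key : ∀ {H : ℝ → ℝ} {d : ℝ}, HasDerivWithinAt H d (Set.Icc 0 ε) 0 → 0 < d →
      ∃ δ > 0, δ ≤ ε ∧ ∀ u, 0 < u → u ≤ δ → H 0 < H u := by
    intro H d hH hd
    rw [hasDerivWithinAt_iff_tendsto_slope] at hH
    have h := hH.eventually (lt_mem_nhds hd)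
    rw [eventually_nhdsWithin_iff, Metric.eventually_nhds_iff] at h
    obtain ⟨r, hr, h⟩ := h
    refine ⟨min (r / 2) ε, by positivity, min_le_right _ _, fun u hu hu2 => ?_⟩
    have hur : u ≤ r / 2 := hu2.trans (min_le_left _ _)
    have hue : u ≤ ε := hu2.trans (min_le_right _ _)
    have := @h u (by rw [Real.dist_eq, sub_zero, abs_of_pos hu]; linarith)
      ⟨⟨hu.le, hue⟩, by simpa using hu.ne'⟩
    rw [slope_def_field, sub_zero] at this
    have h3 := (div_pos_iff_of_pos_right hu).1 this
    linarith
  constructor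
  · by_contra hcon
    obtain ⟨δ, hδ, hδε, h⟩ := key (h1 0 ⟨le_rfl, hε.le⟩) (not_le.1 hcon)
    have := h δ hδ le_rfl
    have := hmax δ ⟨hδ.le, hδε⟩
    linarith
  · intro h0
    by_contra hcon
    obtain ⟨δ, hδ, hδε, h⟩ := key h2 (not_le.1 hcon)
    have hm : StrictMonoOn G (Set.Icc 0 δ) := by
      apply strictMonoOn_of_deriv_pos (convex_Icc 0 δ)
      · intro u hu
        exact ((h1 u ⟨hu.1, hu.2.trans hδε⟩).continuousWithinAt).mono
          (Set.Icc_subset_Icc le_rfl hδε)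
      · intro u hu
        rw [interior_Icc] at hu
        have hd := (h1 u ⟨hu.1.le, hu.2.le.trans hδε⟩).hasDerivAt
          (Icc_mem_nhds hu.1 (hu.2.trans_le hδε))
        rw [hd.deriv, ← h0]
        exact h u hu.1 hu.2.le
    have := hm ⟨le_rfl, hδ.le⟩ ⟨hδ.le, le_rfl⟩ hδ
    have := hmax δ ⟨hδ.le, hδε⟩
    linarith

lemma aux_dir {n m : ℕ} {M : Set (EuclideanSpace ℝ (Fin n))}
    {F : EuclideanSpace ℝ (Fin n) → EuclideanSpace ℝ (Fin m)}
    {DF : EuclideanSpace ℝ (Fin n) →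
      (EuclideanSpace ℝ (Fin n) →L[ℝ] EuclideanSpace ℝ (Fin m))}
    {D2F : (EuclideanSpace ℝ (Fin n) →L[ℝ]
        (EuclideanSpace ℝ (Fin n) →L[ℝ] EuclideanSpace ℝ (Fin m)))}
    {x e : EuclideanSpace ℝ (Fin n)} {l : EuclideanSpace ℝ (Fin m)}
    (h1 : ∀ y ∈ M, HasFDerivWithinAt F (DF y) M y)
    (h2 : HasFDerivWithinAt DF D2F M x)
    (hmax : ∀ y ∈ M, ⟪l, F y⟫ ≤ ⟪l, F x⟫)
    (he : ∃ ε > (0 : ℝ), ∀ u ∈ Set.Icc (0 : ℝ) ε, x + u • e ∈ M) :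
    ⟪l, DF x e⟫ ≤ 0 ∧ (⟪l, DF x e⟫ = 0 → ⟪l, D2F e e⟫ ≤ 0) := by
  obtain ⟨ε, hε, he⟩ := he
  have hline : ∀ u : ℝ, HasDerivWithinAt (fun u : ℝ => x + u • e) e (Set.Icc 0 ε) u := by
    intro u
    have := ((hasDerivAt_id u).smul_const e).const_add x
    simpa using this.hasDerivWithinAt
  have hin : ∀ {H : ℝ → EuclideanSpace ℝ (Fin m)} {d : EuclideanSpace ℝ (Fin m)} {u : ℝ},
      HasDerivWithinAt H d (Set.Icc 0 ε) u →
      HasDerivWithinAt (fun u => ⟪l, H u⟫) ⟪l, d⟫ (Set.Icc 0 ε) u := by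
    intro H d u hH
    exact ((innerSL ℝ l).hasFDerivAt.comp_hasDerivWithinAt u hH)
  have := aux_1d (G := fun u : ℝ => ⟪l, F (x + u • e)⟫)
    (G' := fun u : ℝ => ⟪l, DF (x + u • e) e⟫) (c := ⟪l, D2F e e⟫) hε ?_ ?_ ?_
  · simpa using this
  · intro u hu
    exact hin ((h1 _ (he u hu)).comp_hasDerivWithinAt u (hline u) he)
  · apply hin
    have h2' : HasFDerivWithinAt DF D2F M (x + (0 : ℝ) • e) := by simpa using h2
    have := h2'.comp_hasDerivWithinAt 0 (hline 0) he
    have h4 := this.clm_apply (hasDerivWithinAt_const (0 : ℝ) (Set.Icc 0 ε) e)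
    simpa using h4
  · intro u hu
    simpa using hmax _ (he u hu)

lemma aux_proj {m : ℕ} {W : Set (EuclideanSpace ℝ (Fin m))}
    (hWconv : Convex ℝ W) {v w : EuclideanSpace ℝ (Fin m)} (hw : w ∈ W)
    (h : dist v w = Metric.infDist v W) : ∀ σ ∈ W, ⟪v - w, σ - w⟫ ≤ 0 := by
  rw [← norm_eq_iInf_iff_real_inner_le_zero hWconv hw, ← dist_eq_norm, h,
    Metric.infDist_eq_iInf]
  simp [dist_eq_norm]

lemma aux_sup {m : ℕ} {W : Set (EuclideanSpace ℝ (Fin m))}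
    (hWne : W.Nonempty) (hWcl : IsClosed W)
    (hWconv : Convex ℝ W) {v w : EuclideanSpace ℝ (Fin m)} (hw : w ∈ W)
    (h : dist v w = Metric.infDist v W) (z : EuclideanSpace ℝ (Fin m)) :
    ⟪v - w, z - w⟫ ≤ ‖v - w‖ * Metric.infDist z W := by
  obtain ⟨p, hp, hzp⟩ := hWcl.exists_infDist_eq_dist hWne z
  have h1 := aux_proj hWconv hw h p hp
  have h2 := real_inner_le_norm (v - w) (z - p)
  rw [hzp, dist_eq_norm]
  have : ⟪v - w, z - w⟫ = ⟪v - w, z - p⟫ + ⟪v - w, p - w⟫ := by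
    rw [← inner_add_right]; congr 1; abel
  linarith

/-- first and second order conditions at a maximum, given inward directions. -/
lemma aux_bdry {n m : ℕ} {M : Set (EuclideanSpace ℝ (Fin n))}
    {F : EuclideanSpace ℝ (Fin n) → EuclideanSpace ℝ (Fin m)}
    {DF : EuclideanSpace ℝ (Fin n) →
      (EuclideanSpace ℝ (Fin n) →L[ℝ] EuclideanSpace ℝ (Fin m))}
    {D2F : (EuclideanSpace ℝ (Fin n) →L[ℝ]
        (EuclideanSpace ℝ (Fin n) →L[ℝ] EuclideanSpace ℝ (Fin m)))}
    {x ν : EuclideanSpace ℝ (Fin n)} {l : EuclideanSpace ℝ (Fin m)}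
    (h1 : ∀ y ∈ M, HasFDerivWithinAt F (DF y) M y)
    (h2 : HasFDerivWithinAt DF D2F M x)
    (hmax : ∀ y ∈ M, ⟪l, F y⟫ ≤ ⟪l, F x⟫)
    (hν : ‖ν‖ = 1)
    (he : ∀ e : EuclideanSpace ℝ (Fin n), ⟪e, ν⟫ < 0 →
      ∃ ε > (0 : ℝ), ∀ u ∈ Set.Icc (0 : ℝ) ε, x + u • e ∈ M)
    (hle : ⟪l, DF x ν⟫ ≤ 0) (e : EuclideanSpace ℝ (Fin n)) :
    ⟪l, DF x e⟫ = 0 ∧ ⟪l, D2F e e⟫ ≤ 0 := by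
  have hνν : ⟪ν, ν⟫ = 1 := by rw [real_inner_self_eq_norm_sq, hν]; norm_num
  -- closedness
  have lim : ∀ {q : EuclideanSpace ℝ (Fin n) → ℝ}, Continuous q →
      (∀ e, ⟪e, ν⟫ < 0 → q e ≤ 0) → ∀ e, ⟪e, ν⟫ ≤ 0 → q e ≤ 0 := by
    intro q hq hneg e hen
    have ht : Filter.Tendsto (fun d : ℝ => q (e - d • ν)) (nhdsWithin 0 (Set.Ioi 0))
        (nhds (q e)) := by
      have : Continuous (fun d : ℝ => q (e - d • ν)) := by fun_prop
      have := (this.tendsto 0).mono_left (nhdsWithin_le_nhds (s := Set.Ioi (0 : ℝ)))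
      simpa using this
    refine le_of_tendsto ht ?_
    filter_upwards [self_mem_nhdsWithin] with d hd
    apply hneg
    rw [inner_sub_left, real_inner_smul_left, hνν]
    have : 0 < d := hd
    linarith
  have hc1 : Continuous (fun e => ⟪l, DF x e⟫) := by fun_prop
  have hc2 : Continuous (fun e => ⟪l, D2F e e⟫) := by fun_prop
  have hd1 := lim hc1 (fun e hen => (aux_dir h1 h2 hmax (he e hen)).1)
  have hzero : ∀ e, ⟪l, DF x e⟫ = 0 := by
    have hν0 : ⟪l, DF x ν⟫ = 0 := by
      have := hd1 (-ν) (by rw [inner_neg_left, hνν]; norm_num)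
      rw [map_neg, inner_neg_right] at this
      linarith
    intro e
    have ha := hd1 (e - ⟪e, ν⟫ • ν) (by
      rw [inner_sub_left, real_inner_smul_left, hνν]; simp)
    have hb := hd1 (-(e - ⟪e, ν⟫ • ν)) (by
      rw [inner_neg_left, inner_sub_left, real_inner_smul_left, hνν]; simp)
    rw [map_neg, inner_neg_right] at hb
    rw [map_sub, map_smul, inner_sub_right, real_inner_smul_right, hν0] at ha hb
    linarith
  refine ⟨hzero e, ?_⟩
  have hd2 := lim hc2 (fun e hen => (aux_dir h1 h2 hmax (he e hen)).2 (hzero e))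
  rcases le_total ⟪e, ν⟫ 0 with h | h
  · exact hd2 e h
  · have := hd2 (-e) (by rw [inner_neg_left]; linarith)
    simpa using this

lemma aux_int {n m : ℕ} {M : Set (EuclideanSpace ℝ (Fin n))}
    {F : EuclideanSpace ℝ (Fin n) → EuclideanSpace ℝ (Fin m)}
    {DF : EuclideanSpace ℝ (Fin n) →
      (EuclideanSpace ℝ (Fin n) →L[ℝ] EuclideanSpace ℝ (Fin m))}
    {D2F : (EuclideanSpace ℝ (Fin n) →L[ℝ]
        (EuclideanSpace ℝ (Fin n) →L[ℝ] EuclideanSpace ℝ (Fin m)))}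
    {x : EuclideanSpace ℝ (Fin n)} {l : EuclideanSpace ℝ (Fin m)}
    (h1 : ∀ y ∈ M, HasFDerivWithinAt F (DF y) M y)
    (h2 : HasFDerivWithinAt DF D2F M x)
    (hmax : ∀ y ∈ M, ⟪l, F y⟫ ≤ ⟪l, F x⟫)
    (hx : x ∈ interior M) (e : EuclideanSpace ℝ (Fin n)) :
    ⟪l, DF x e⟫ = 0 ∧ ⟪l, D2F e e⟫ ≤ 0 := by
  have he : ∀ e : EuclideanSpace ℝ (Fin n),
      ∃ ε > (0 : ℝ), ∀ u ∈ Set.Icc (0 : ℝ) ε, x + u • e ∈ M := by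
    intro e
    have hc : Continuous (fun u : ℝ => x + u • e) := by fun_prop
    have : ∀ᶠ u in nhds (0 : ℝ), x + u • e ∈ M := by
      apply hc.continuousAt.eventually
      simpa using mem_interior_iff_mem_nhds.1 hx
    obtain ⟨r, hr, h⟩ := Metric.eventually_nhds_iff.1 this
    refine ⟨r / 2, by positivity, fun u hu => h ?_⟩
    rw [Real.dist_eq, sub_zero, abs_of_nonneg hu.1]
    linarith [hu.2]
  have ha := aux_dir h1 h2 hmax (he e)
  have hb := (aux_dir h1 h2 hmax (he (-e))).1
  rw [map_neg, inner_neg_right] at hb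
  have h0 : ⟪l, DF x e⟫ = 0 := le_antisymm ha.1 (by linarith)
  exact ⟨h0, ha.2 h0⟩

lemma aux_time {G : ℝ → ℝ} {d t : ℝ} (ht : 0 < t) (hG : HasDerivAt G d t)
    (hmax : ∀ s ∈ Set.Ioc 0 t, G s ≤ G t) : 0 ≤ d := by
  have h := (hasDerivAt_iff_tendsto_slope.1 hG).mono_left
    (nhdsWithin_mono t (fun s (hs : s ∈ Set.Iio t) => (ne_of_lt hs : s ≠ t)))
  refine ge_of_tendsto h ?_
  filter_upwards [Ioo_mem_nhdsLT ht] with s hs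
  rw [slope_def_field]
  exact div_nonneg_of_nonpos (by linarith [hmax s ⟨hs.1, hs.2.le⟩]) (by linarith [hs.2])

/-- Hopf boundary point lemma for parabolic systems. -/
theorem stmt_4
    (n m : ℕ)
    -- M is the closure of a bounded domain (bounded connected open set) in ℝⁿ
    (Ω : Set (EuclideanSpace ℝ (Fin n)))
    (hΩopen : IsOpen Ω) (hΩconn : IsConnected Ω) (hΩbdd : Bornology.IsBounded Ω)
    (M : Set (EuclideanSpace ℝ (Fin n))) (hM : M = closure Ω)
    (T : ℝ) (hT : 0 < T)
    -- W is a nonempty closed convex subset of ℝᵐ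
    (W : Set (EuclideanSpace ℝ (Fin m)))
    (hWne : W.Nonempty) (hWcl : IsClosed W) (hWconv : Convex ℝ W)
    -- φ is Lipschitz in v, uniformly in (t,x), on every compact set U ⊆ ℝᵐ
    (φ : ℝ → EuclideanSpace ℝ (Fin n) → EuclideanSpace ℝ (Fin m) →
      EuclideanSpace ℝ (Fin m))
    (hφ : ∀ U : Set (EuclideanSpace ℝ (Fin m)), IsCompact U → ∃ C > (0 : ℝ),
      ∀ t ∈ Set.Ioo (0 : ℝ) T, ∀ x ∈ M, ∀ v₁ ∈ U, ∀ v₂ ∈ U,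
        ‖φ t x v₁ - φ t x v₂‖ ≤ C * ‖v₁ - v₂‖)
    -- drift coefficients
    (ζ : Fin n → ℝ → EuclideanSpace ℝ (Fin n) → ℝ)
    -- the solution f, its time derivative f', its first and second spatial
    -- derivatives (taken within M)
    (f f' : ℝ → EuclideanSpace ℝ (Fin n) → EuclideanSpace ℝ (Fin m))
    (Df : ℝ → EuclideanSpace ℝ (Fin n) →
      (EuclideanSpace ℝ (Fin n) →L[ℝ] EuclideanSpace ℝ (Fin m)))
    (D2f : ℝ → EuclideanSpace ℝ (Fin n) →
      (EuclideanSpace ℝ (Fin n) →L[ℝ]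
        (EuclideanSpace ℝ (Fin n) →L[ℝ] EuclideanSpace ℝ (Fin m))))
    (hfcont : ContinuousOn (fun p : ℝ × EuclideanSpace ℝ (Fin n) => f p.1 p.2)
      (Set.Icc 0 T ×ˢ M))
    (hft : ∀ t ∈ Set.Ioo (0 : ℝ) T, ∀ x ∈ M,
      HasDerivAt (fun s => f s x) (f' t x) t)
    (hftcont : ∀ x ∈ M, ContinuousOn (fun t => f' t x) (Set.Ioo (0 : ℝ) T))
    (hDf : ∀ t ∈ Set.Ioo (0 : ℝ) T, ∀ x ∈ M,
      HasFDerivWithinAt (f t) (Df t x) M x)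
    (hD2f : ∀ t ∈ Set.Ioo (0 : ℝ) T, ∀ x ∈ M,
      HasFDerivWithinAt (Df t) (D2f t x) M x)
    -- the parabolic system
    (hPDE : ∀ t ∈ Set.Ioo (0 : ℝ) T, ∀ x ∈ M,
      f' t x =
        (∑ j : Fin n, D2f t x (EuclideanSpace.single j 1) (EuclideanSpace.single j 1))
        + (∑ j : Fin n, ζ j t x • Df t x (EuclideanSpace.single j 1))
        + φ t x (f t x))
    -- the outward unit normal on the boundary of M
    (ν : EuclideanSpace ℝ (Fin n) → EuclideanSpace ℝ (Fin n))
    (hν1 : ∀ x ∈ frontier M, ‖ν x‖ = 1)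
    (hν2 : ∀ x ∈ frontier M, ∀ e : EuclideanSpace ℝ (Fin n), ⟪e, ν x⟫ < 0 →
      ∃ ε > (0 : ℝ), ∀ u ∈ Set.Icc (0 : ℝ) ε, x + u • e ∈ M)
    -- Requirement 1: the initial value lies in W
    (hreq1 : ∀ x ∈ M, f 0 x ∈ W)
    -- Requirement 2: φ points into W on the boundary of W
    (hreq2 : ∀ t ∈ Set.Ioo (0 : ℝ) T, ∀ x ∈ M, ∀ ω ∈ frontier W,
      ∀ lam, IsSupportingVector W ω lam → ⟪lam, φ t x ω⟫ ≤ 0)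
    -- f leaves W at some time in (0,T]
    (hout : ∃ t ∈ Set.Ioc (0 : ℝ) T, ∃ x ∈ M, f t x ∉ W) :
    -- conclusion: there is a maximal distance pair (t₀,x₀) ∈ (0,T) × ∂M with
    -- ⟪λ(f(t₀,x₀)), D_x f(t₀,x₀)[ν(x₀)]⟫ > 0
    ∃ t₀ ∈ Set.Ioo (0 : ℝ) T, ∃ x₀ ∈ frontier M,
      (Metric.infDist (f t₀ x₀) W
          = sSup ((fun y => Metric.infDist (f t₀ y) W) '' M) ∧
        0 < Metric.infDist (f t₀ x₀) W) ∧
      ∀ w ∈ W, dist (f t₀ x₀) w = Metric.infDist (f t₀ x₀) W →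
        0 < ⟪f t₀ x₀ - w, Df t₀ x₀ (ν x₀)⟫ := by
  have hMc : IsCompact M := by
    rw [hM]; exact hΩbdd.isCompact_closure
  -- an exit time before T
  obtain ⟨t₁, ht₁, x₁, hx₁, hout₁⟩ : ∃ t ∈ Set.Ioo (0 : ℝ) T, ∃ x ∈ M, f t x ∉ W := by
    obtain ⟨t, ht, x, hx, hf⟩ := hout
    rcases lt_or_eq_of_le ht.2 with h | h
    · exact ⟨t, ⟨ht.1, h⟩, x, hx, hf⟩
    · subst h
      have hc : ContinuousWithinAt (fun s => f s x) (Set.Icc 0 t) t := by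
        have h1 : ContinuousOn (fun s : ℝ => (s, x)) (Set.Icc 0 t) := by fun_prop
        have h2 := hfcont.comp h1 (fun s hs => ⟨hs, hx⟩)
        exact h2 t ⟨hT.le, le_rfl⟩
      have hc' := hc.mono_of_mem_nhdsWithin (s := Set.Iio t)
        (Filter.mem_of_superset (Ioo_mem_nhdsLT hT) Set.Ioo_subset_Icc_self)
      have hev := hc'.eventually (hWcl.isOpen_compl.mem_nhds hf)
      obtain ⟨s, hs1, hs2⟩ := (hev.and (Ioo_mem_nhdsLT hT)).exists
      exact ⟨s, hs2, x, hx, hs1⟩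
  -- bounds
  have hKc : IsCompact (Set.Icc 0 T ×ˢ M) := isCompact_Icc.prod hMc
  obtain ⟨R, hR⟩ := (hKc.image_of_continuousOn hfcont).isBounded.exists_norm_le
  have hR' : ∀ t ∈ Set.Icc 0 T, ∀ x ∈ M, ‖f t x‖ ≤ R := fun t ht x hx =>
    hR _ ⟨(t, x), ⟨ht, hx⟩, rfl⟩
  obtain ⟨w₀, hw₀⟩ := hWne
  obtain ⟨C, hC, hLip⟩ := hφ (Metric.closedBall 0 (2 * R + ‖w₀‖)) (isCompact_closedBall _ _)
  -- maximize
  have hsub : Set.Icc 0 t₁ ×ˢ M ⊆ Set.Icc 0 T ×ˢ M :=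
    Set.prod_mono (Set.Icc_subset_Icc le_rfl ht₁.2.le) le_rfl
  have hcontK : ContinuousOn (fun p : ℝ × EuclideanSpace ℝ (Fin n) =>
      Real.exp (-(C + 1) * p.1) * Metric.infDist (f p.1 p.2) W) (Set.Icc 0 t₁ ×ˢ M) := by
    apply ContinuousOn.mul
    · fun_prop
    · exact (Metric.continuous_infDist_pt W).comp_continuousOn (hfcont.mono hsub)
  obtain ⟨⟨t₀, x₀⟩, ⟨ht₀, hx₀⟩, hmaxK⟩ := (isCompact_Icc.prod hMc).exists_isMaxOn
    ⟨(t₁, x₁), ⟨⟨ht₁.1.le, le_rfl⟩, hx₁⟩⟩ hcontK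
  have hmaxK' : ∀ s ∈ Set.Icc 0 t₁, ∀ y ∈ M,
      Real.exp (-(C + 1) * s) * Metric.infDist (f s y) W
        ≤ Real.exp (-(C + 1) * t₀) * Metric.infDist (f t₀ x₀) W :=
    fun s hs y hy => hmaxK (show (s, y) ∈ Set.Icc 0 t₁ ×ˢ M from ⟨hs, hy⟩)
  have hWne : W.Nonempty := ⟨w₀, hw₀⟩
  have hpos₁ : 0 < Metric.infDist (f t₁ x₁) W :=
    (hWcl.notMem_iff_infDist_pos hWne).1 hout₁
  have hpos : 0 < Metric.infDist (f t₀ x₀) W := by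
    have h1 := hmaxK' t₁ ⟨ht₁.1.le, le_rfl⟩ x₁ hx₁
    have h2 := (mul_pos (Real.exp_pos (-(C + 1) * t₁)) hpos₁).trans_le h1
    exact (mul_pos_iff_of_pos_left (Real.exp_pos _)).1 h2
  have ht₀pos : 0 < t₀ := by
    rcases lt_or_eq_of_le ht₀.1 with h | h
    · exact h
    · exfalso
      have : f t₀ x₀ ∈ W := by
        have h' : t₀ = 0 := h.symm
        rw [h']; exact hreq1 x₀ hx₀
      rw [Metric.infDist_zero_of_mem this] at hpos
      exact lt_irrefl _ hpos
  have ht₀T : t₀ ∈ Set.Ioo 0 T := ⟨ht₀pos, ht₀.2.trans_lt ht₁.2⟩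
  have hmaxd : ∀ y ∈ M, Metric.infDist (f t₀ y) W ≤ Metric.infDist (f t₀ x₀) W := fun y hy =>
    le_of_mul_le_mul_left (hmaxK' t₀ ht₀ y hy) (Real.exp_pos _)
  -- spatial maximum
  have hspace : ∀ w ∈ W, dist (f t₀ x₀) w = Metric.infDist (f t₀ x₀) W →
      ∀ y ∈ M, ⟪f t₀ x₀ - w, f t₀ y⟫ ≤ ⟪f t₀ x₀ - w, f t₀ x₀⟫ := by
    intro w hw hd y hy
    have h1 := aux_sup hWne hWcl hWconv hw hd (f t₀ y)
    have h2 : ‖f t₀ x₀ - w‖ * Metric.infDist (f t₀ y) W ≤ ‖f t₀ x₀ - w‖ * ‖f t₀ x₀ - w‖ := by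
      apply mul_le_mul_of_nonneg_left _ (norm_nonneg _)
      rw [← dist_eq_norm, hd]; exact hmaxd y hy
    rw [← real_inner_self_eq_norm_mul_norm] at h2
    have h3 := h1.trans h2
    rw [inner_sub_right (f t₀ x₀ - w) (f t₀ y) w,
      inner_sub_right (f t₀ x₀ - w) (f t₀ x₀) w] at h3
    linarith
  -- the contradiction
  have key : ∀ w ∈ W, dist (f t₀ x₀) w = Metric.infDist (f t₀ x₀) W →
      (∀ e, ⟪f t₀ x₀ - w, Df t₀ x₀ e⟫ = 0 ∧ ⟪f t₀ x₀ - w, D2f t₀ x₀ e e⟫ ≤ 0) → False := by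
    intro w hw hd hder
    set l := f t₀ x₀ - w with hl
    have hlpos : 0 < ‖l‖ := by rw [hl, ← dist_eq_norm, hd]; exact hpos
    have hproj := aux_proj hWconv hw hd
    -- time derivative
    have htime : (C + 1) * ‖l‖ ^ 2 ≤ ⟪l, f' t₀ x₀⟫ := by
      have hG1 : HasDerivAt (fun s => ⟪l, f s x₀ - w⟫) ⟪l, f' t₀ x₀⟫ t₀ := by
        have := (hft t₀ ht₀T x₀ hx₀).sub_const w
        exact ((innerSL ℝ l).hasFDerivAt.comp_hasDerivAt t₀ this)
      have hG2 : HasDerivAt (fun s => Real.exp (-(C + 1) * s))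
          (Real.exp (-(C + 1) * t₀) * (-(C + 1))) t₀ := by
        have := ((hasDerivAt_id t₀).const_mul (-(C + 1))).exp
        simpa using this
      have hG := hG2.mul hG1
      have h0 := aux_time ht₀pos hG (by
        intro s hs
        have h1 := aux_sup hWne hWcl hWconv hw hd (f s x₀)
        have h2 := hmaxK' s ⟨hs.1.le, hs.2.trans ht₀.2⟩ x₀ hx₀
        have h3 : ⟪l, f t₀ x₀ - w⟫ = ‖l‖ * Metric.infDist (f t₀ x₀) W := by
          rw [← hd, dist_eq_norm, ← hl, real_inner_self_eq_norm_mul_norm]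
        calc Real.exp (-(C + 1) * s) * ⟪l, f s x₀ - w⟫
            ≤ Real.exp (-(C + 1) * s) * (‖l‖ * Metric.infDist (f s x₀) W) :=
              mul_le_mul_of_nonneg_left h1 (Real.exp_pos _).le
          _ = ‖l‖ * (Real.exp (-(C + 1) * s) * Metric.infDist (f s x₀) W) := by ring
          _ ≤ ‖l‖ * (Real.exp (-(C + 1) * t₀) * Metric.infDist (f t₀ x₀) W) :=
              mul_le_mul_of_nonneg_left h2 hlpos.le
          _ = Real.exp (-(C + 1) * t₀) * ⟪l, f t₀ x₀ - w⟫ := by rw [h3]; ring)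
      rw [← hl, real_inner_self_eq_norm_sq] at h0
      have h1 : 0 ≤ Real.exp (-(C + 1) * t₀) * (⟪l, f' t₀ x₀⟫ - (C + 1) * ‖l‖ ^ 2) := by
        linarith
      have h2 := nonneg_of_mul_nonneg_right h1 (Real.exp_pos _)
      linarith
    -- PDE
    have hsum1 : ⟪l, ∑ j : Fin n, D2f t₀ x₀ (EuclideanSpace.single j 1)
        (EuclideanSpace.single j 1)⟫ ≤ 0 := by
      rw [inner_sum]
      exact Finset.sum_nonpos (fun j _ => (hder _).2)
    have hsum2 : ⟪l, ∑ j : Fin n, ζ j t₀ x₀ • Df t₀ x₀ (EuclideanSpace.single j 1)⟫ = 0 := by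
      rw [inner_sum]
      apply Finset.sum_eq_zero
      intro j _
      rw [real_inner_smul_right, (hder _).1, mul_zero]
    have hpde := congrArg (fun z => ⟪l, z⟫) (hPDE t₀ ht₀T x₀ hx₀)
    simp only [inner_add_right] at hpde
    -- boundary of W
    have hwfr : w ∈ frontier W := by
      refine ⟨subset_closure hw, fun hint => ?_⟩
      have hc : Continuous (fun u : ℝ => w + u • l) := by fun_prop
      have : ∀ᶠ u in nhds (0 : ℝ), w + u • l ∈ W := by
        apply hc.continuousAt.eventually
        simpa using mem_interior_iff_mem_nhds.1 hint
      obtain ⟨r, hr, h⟩ := Metric.eventually_nhds_iff.1 this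
      have h1 : w + (r / 2) • l ∈ W := h (by
        rw [Real.dist_eq, sub_zero, abs_of_pos (by positivity)]; linarith)
      have h2 := hproj _ h1
      rw [add_sub_cancel_left, ← hl, real_inner_smul_right, real_inner_self_eq_norm_sq] at h2
      have : 0 < r / 2 * ‖l‖ ^ 2 := by positivity
      linarith
    have hsupp : IsSupportingVector W w (‖l‖⁻¹ • l) := by
      constructor
      · rw [norm_smul, norm_inv, norm_norm, inv_mul_cancel₀ hlpos.ne']
      · intro σ hσ
        have h1 := hproj σ hσ
        rw [← hl, inner_sub_right] at h1
        rw [real_inner_smul_left, real_inner_smul_left]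
        exact mul_le_mul_of_nonneg_left (by linarith) (by positivity)
    have hphi1 : ⟪l, φ t₀ x₀ w⟫ ≤ 0 := by
      have h1 := hreq2 t₀ ht₀T x₀ hx₀ w hwfr _ hsupp
      rw [real_inner_smul_left] at h1
      by_contra hcon
      have := mul_pos (inv_pos.2 hlpos) (not_le.1 hcon)
      linarith
    have hfR := hR' t₀ ⟨ht₀T.1.le, ht₀T.2.le⟩ x₀ hx₀
    have hR0 : 0 ≤ R := (norm_nonneg _).trans hfR
    have hphi2 : ‖φ t₀ x₀ (f t₀ x₀) - φ t₀ x₀ w‖ ≤ C * ‖l‖ := by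
      apply hLip t₀ ht₀T x₀ hx₀
      · rw [mem_closedBall_zero_iff]
        linarith [norm_nonneg w₀]
      · rw [mem_closedBall_zero_iff]
        have h1 : ‖l‖ ≤ ‖f t₀ x₀ - w₀‖ := by
          rw [hl, ← dist_eq_norm, hd, ← dist_eq_norm]
          exact Metric.infDist_le_dist_of_mem hw₀
        have h2 := norm_sub_le (f t₀ x₀) w₀
        have h3 : w = f t₀ x₀ - l := by rw [hl]; abel
        have h4 := norm_sub_le (f t₀ x₀) l
        rw [← h3] at h4
        linarith
    have hphi3 := real_inner_le_norm l (φ t₀ x₀ (f t₀ x₀) - φ t₀ x₀ w)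
    rw [inner_sub_right] at hphi3
    have hphi4 := mul_le_mul_of_nonneg_left hphi2 hlpos.le
    have : 0 < ‖l‖ ^ 2 := by positivity
    nlinarith
  have hfr : x₀ ∈ frontier M := by
    by_contra hcon
    have hint : x₀ ∈ interior M := by
      by_contra h
      exact hcon ⟨subset_closure hx₀, h⟩
    obtain ⟨w, hw, hd⟩ := hWcl.exists_infDist_eq_dist hWne (f t₀ x₀)
    exact key w hw hd.symm (aux_int (hDf t₀ ht₀T) (hD2f t₀ ht₀T x₀ hx₀)
      (hspace w hw hd.symm) hint)
  refine ⟨t₀, ht₀T, x₀, hfr, ⟨?_, hpos⟩, ?_⟩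
  · symm
    apply IsGreatest.csSup_eq
    refine ⟨⟨x₀, hx₀, rfl⟩, ?_⟩
    rintro _ ⟨y, hy, rfl⟩
    exact hmaxd y hy
  · intro w hw hd
    by_contra hcon
    exact key w hw hd (aux_bdry (hDf t₀ ht₀T) (hD2f t₀ ht₀T x₀ hx₀)
      (hspace w hw hd) (hν1 x₀ hfr) (hν2 x₀ hfr) (not_lt.1 hcon))
end

section
/- (Maximum principle with Dirichlet-type boundary control for parabolic systems.) Assume the setting below, together with Requirement 1 and Requirement 2. If f(t,x) lies in W for all (t,x) ∈ (0,T) × ∂M, then f(t,x) lies in W for all (t,x) ∈ [0,T] × M. -/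
open scoped RealInnerProductSpace

lemma aux_second {g g' : ℝ → ℝ} {g2 : ℝ} (h1 : ∀ᶠ u in nhds (0:ℝ), HasDerivAt g (g' u) u)
    (h2 : HasDerivAt g' g2 0) (hmax : IsLocalMax g 0) : g2 ≤ 0 := by
  by_contra hpos
  push Not at hpos
  have h10 : g' 0 = 0 := hmax.hasDerivAt_eq_zero h1.self_of_nhds
  have e1 : ∀ᶠ u in nhds (0:ℝ),
      HasDerivAt (fun u => g u - g2 / 4 * u ^ 2) (g' u - g2 / 2 * u) u := by
    filter_upwards [h1] with u hu
    have := hu.sub (((hasDerivAt_id u).pow 2).const_mul (g2 / 4))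
    refine this.congr_deriv ?_
    simp; ring
  have e2 : deriv (fun u => g u - g2 / 4 * u ^ 2) =ᶠ[nhds 0] fun u => g' u - g2 / 2 * u := by
    filter_upwards [e1] with u hu using hu.deriv
  have e3 : HasDerivAt (fun u => g' u - g2 / 2 * u) (g2 / 2) 0 := by
    have := h2.sub ((hasDerivAt_id (0:ℝ)).const_mul (g2 / 2))
    refine this.congr_deriv ?_
    ring
  have hmin : IsLocalMin (fun u => g u - g2 / 4 * u ^ 2) 0 := by
    apply isLocalMin_of_deriv_deriv_pos
    · rw [e2.deriv_eq, e3.deriv]; linarith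
    · rw [e1.self_of_nhds.deriv, h10]; simp
    · exact e1.self_of_nhds.continuousAt
  have hev : ∀ᶠ u in nhds (0:ℝ), u = 0 := by
    filter_upwards [hmin, hmax] with u ha hb
    have : g2 / 4 * u ^ 2 ≤ 0 := by
      simp at ha; linarith
    have h3 : u ^ 2 ≤ 0 := by
      by_contra h; push Not at h
      have : 0 < g2 / 4 * u ^ 2 := by positivity
      linarith
    exact pow_eq_zero_iff (two_ne_zero) |>.1 (le_antisymm h3 (sq_nonneg u))
  obtain ⟨ε, hε, h⟩ := Metric.eventually_nhds_iff.1 hev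
  have := @h (ε / 2) (by rw [Real.dist_eq, sub_zero, abs_of_pos (by linarith)]; linarith)
  linarith

lemma aux_time_s5 {a : ℝ → ℝ} {a' L t0 : ℝ} (ht0pos : 0 < t0) (hd1 : HasDerivAt a a' t0)
    (hm : ∀ s ∈ Set.Ioo 0 t0, Real.exp (-L * s) * a s ≤ Real.exp (-L * t0) * a t0) :
    L * a t0 ≤ a' := by
  have hd2 : HasDerivAt (fun s => Real.exp (-L * s)) (Real.exp (-L * t0) * (-L)) t0 := by
    simpa using ((hasDerivAt_id t0).const_mul (-L)).exp
  have hd3 := hd2.mul hd1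
  have hnn : 0 ≤ Real.exp (-L * t0) * (-L) * a t0 + Real.exp (-L * t0) * a' := by
    have hs := hasDerivAt_iff_tendsto_slope.1 hd3
    have hs' := hs.mono_left (nhdsWithin_mono t0
      (show Set.Iio t0 ⊆ {t0}ᶜ from fun s hs => ne_of_lt hs))
    refine ge_of_tendsto hs' ?_
    filter_upwards [Ioo_mem_nhdsLT ht0pos] with s hs
    have hle1 := hm s hs
    rw [slope_def_field]
    apply div_nonneg_of_nonpos
    · simp only [Pi.mul_apply]; linarith
    · linarith [hs.2]
  have : 0 ≤ Real.exp (-L * t0) * (a' - L * a t0) := by linarith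
  have := nonneg_of_mul_nonneg_right this (Real.exp_pos _)
  linarith

/-- projection onto W -/
lemma aux_proj_s5 {m : ℕ} (W : Set (EuclideanSpace ℝ (Fin m)))
    (hWne : W.Nonempty) (hWcl : IsClosed W) (hWconv : Convex ℝ W)
    (v : EuclideanSpace ℝ (Fin m)) (hv : 0 < Metric.infDist v W) :
    ∃ ω ∈ frontier W, ∃ lam, IsSupportingVector W ω lam ∧ ‖v - ω‖ = Metric.infDist v W ∧
      ⟪lam, v - ω⟫ = Metric.infDist v W ∧ ∀ w, ⟪lam, w - ω⟫ ≤ Metric.infDist w W := by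
  obtain ⟨ω, hω, hd⟩ := hWcl.exists_infDist_eq_dist hWne v
  rw [dist_eq_norm] at hd
  have hin : ∀ w ∈ W, ⟪v - ω, w - ω⟫ ≤ 0 := by
    rw [← norm_eq_iInf_iff_real_inner_le_zero hWconv hω, ← hd, Metric.infDist_eq_iInf]
    simp [dist_eq_norm]
  set r := Metric.infDist v W with hr
  have hrne : r ≠ 0 := hv.ne'
  set lam := r⁻¹ • (v - ω) with hlam
  have hnorm : ‖lam‖ = 1 := by
    rw [hlam, norm_smul, ← hd, norm_inv, Real.norm_of_nonneg hv.le, inv_mul_cancel₀ hrne]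
  have hin2 : ∀ w ∈ W, ⟪lam, w - ω⟫ ≤ 0 := by
    intro w hw
    rw [hlam, real_inner_smul_left]
    exact mul_nonpos_of_nonneg_of_nonpos (inv_nonneg.2 hv.le) (hin w hw)
  have hsup : IsSupportingVector W ω lam := by
    refine ⟨hnorm, fun σ hσ => ?_⟩
    have := hin2 σ hσ
    rw [inner_sub_right] at this
    linarith
  refine ⟨ω, ?_, lam, hsup, hd.symm, ?_, ?_⟩
  · refine ⟨subset_closure hω, fun hint => ?_⟩
    obtain ⟨ε, hε, hb⟩ := Metric.mem_nhds_iff.1 (mem_interior_iff_mem_nhds.1 hint)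
    have hmem : ω + (ε / 2) • lam ∈ W := by
      apply hb
      rw [Metric.mem_ball, dist_eq_norm, add_sub_cancel_left, norm_smul, hnorm,
        Real.norm_of_nonneg (by linarith)]
      linarith
    have := hin2 _ hmem
    rw [add_sub_cancel_left, real_inner_smul_right, real_inner_self_eq_norm_sq, hnorm] at this
    linarith
  · rw [hlam, real_inner_smul_left, real_inner_self_eq_norm_sq, ← hd]
    field_simp
  · intro w
    obtain ⟨p, hp, hpd⟩ := hWcl.exists_infDist_eq_dist hWne w
    rw [hpd, dist_eq_norm]
    have h1 : w - ω = (w - p) + (p - ω) := by abel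
    have h2 := real_inner_le_norm lam (w - p)
    rw [hnorm, one_mul] at h2
    rw [h1, inner_add_right]
    linarith [hin2 p hp]

set_option maxHeartbeats 1000000 in
/-- Maximum principle with Dirichlet-type boundary control for parabolic systems. -/
theorem stmt_5
    (n m : ℕ)
    -- M is the closure of a bounded domain (bounded connected open set) in ℝⁿ
    (Ω : Set (EuclideanSpace ℝ (Fin n)))
    (hΩopen : IsOpen Ω) (hΩconn : IsConnected Ω) (hΩbdd : Bornology.IsBounded Ω)
    (M : Set (EuclideanSpace ℝ (Fin n))) (hM : M = closure Ω)
    (T : ℝ) (hT : 0 < T)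
    -- W is a nonempty closed convex subset of ℝᵐ
    (W : Set (EuclideanSpace ℝ (Fin m)))
    (hWne : W.Nonempty) (hWcl : IsClosed W) (hWconv : Convex ℝ W)
    -- φ is Lipschitz in v, uniformly in (t,x), on every compact set U ⊆ ℝᵐ
    (φ : ℝ → EuclideanSpace ℝ (Fin n) → EuclideanSpace ℝ (Fin m) →
      EuclideanSpace ℝ (Fin m))
    (hφ : ∀ U : Set (EuclideanSpace ℝ (Fin m)), IsCompact U → ∃ C > (0 : ℝ),
      ∀ t ∈ Set.Ioo (0 : ℝ) T, ∀ x ∈ M, ∀ v₁ ∈ U, ∀ v₂ ∈ U,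
        ‖φ t x v₁ - φ t x v₂‖ ≤ C * ‖v₁ - v₂‖)
    -- drift coefficients
    (ζ : Fin n → ℝ → EuclideanSpace ℝ (Fin n) → ℝ)
    -- the solution f, its time derivative f', its first and second spatial
    -- derivatives (taken within M)
    (f f' : ℝ → EuclideanSpace ℝ (Fin n) → EuclideanSpace ℝ (Fin m))
    (Df : ℝ → EuclideanSpace ℝ (Fin n) →
      (EuclideanSpace ℝ (Fin n) →L[ℝ] EuclideanSpace ℝ (Fin m)))
    (D2f : ℝ → EuclideanSpace ℝ (Fin n) →
      (EuclideanSpace ℝ (Fin n) →L[ℝ]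
        (EuclideanSpace ℝ (Fin n) →L[ℝ] EuclideanSpace ℝ (Fin m))))
    (hfcont : ContinuousOn (fun p : ℝ × EuclideanSpace ℝ (Fin n) => f p.1 p.2)
      (Set.Icc 0 T ×ˢ M))
    (hft : ∀ t ∈ Set.Ioo (0 : ℝ) T, ∀ x ∈ M,
      HasDerivAt (fun s => f s x) (f' t x) t)
    (hftcont : ∀ x ∈ M, ContinuousOn (fun t => f' t x) (Set.Ioo (0 : ℝ) T))
    (hDf : ∀ t ∈ Set.Ioo (0 : ℝ) T, ∀ x ∈ M,
      HasFDerivWithinAt (f t) (Df t x) M x)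
    (hD2f : ∀ t ∈ Set.Ioo (0 : ℝ) T, ∀ x ∈ M,
      HasFDerivWithinAt (Df t) (D2f t x) M x)
    -- the parabolic system
    (hPDE : ∀ t ∈ Set.Ioo (0 : ℝ) T, ∀ x ∈ M,
      f' t x =
        (∑ j : Fin n, D2f t x (EuclideanSpace.single j 1) (EuclideanSpace.single j 1))
        + (∑ j : Fin n, ζ j t x • Df t x (EuclideanSpace.single j 1))
        + φ t x (f t x))
    -- the outward unit normal on the boundary of M
    (ν : EuclideanSpace ℝ (Fin n) → EuclideanSpace ℝ (Fin n))
    (hν1 : ∀ x ∈ frontier M, ‖ν x‖ = 1)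
    (hν2 : ∀ x ∈ frontier M, ∀ e : EuclideanSpace ℝ (Fin n), ⟪e, ν x⟫ < 0 →
      ∃ ε > (0 : ℝ), ∀ u ∈ Set.Icc (0 : ℝ) ε, x + u • e ∈ M)
    -- Requirement 1: the initial value lies in W
    (hreq1 : ∀ x ∈ M, f 0 x ∈ W)
    -- Requirement 2: φ points into W on the boundary of W
    (hreq2 : ∀ t ∈ Set.Ioo (0 : ℝ) T, ∀ x ∈ M, ∀ ω ∈ frontier W,
      ∀ lam, IsSupportingVector W ω lam → ⟪lam, φ t x ω⟫ ≤ 0)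
    -- Dirichlet-type boundary control: f lies in W on (0,T) × ∂M
    (hbd : ∀ t ∈ Set.Ioo (0 : ℝ) T, ∀ x ∈ frontier M, f t x ∈ W) :
    -- conclusion: f lies in W everywhere on [0,T] × M
    ∀ t ∈ Set.Icc (0 : ℝ) T, ∀ x ∈ M, f t x ∈ W := by
  have hMcl : IsClosed M := by rw [hM]; exact isClosed_closure
  have hMne : M.Nonempty := by rw [hM]; exact hΩconn.nonempty.closure
  have hMc : IsCompact M := by rw [hM]; exact hΩbdd.isCompact_closure
  obtain ⟨w0, hw0⟩ := hWne
  have hWne : W.Nonempty := ⟨w0, hw0⟩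
  obtain ⟨R, hR⟩ := ((isCompact_Icc.prod hMc).image_of_continuousOn hfcont).isBounded.exists_norm_le
  have hR' : ∀ t ∈ Set.Icc (0:ℝ) T, ∀ x ∈ M, ‖f t x‖ ≤ R := fun t ht x hx =>
    hR _ ⟨(t, x), ⟨ht, hx⟩, rfl⟩
  obtain ⟨C, hC, hLip⟩ := hφ (Metric.closedBall 0 (2 * R + ‖w0‖)) (isCompact_closedBall _ _)
  -- main claim on `[0,T']`
  have main : ∀ T' ∈ Set.Ioo (0:ℝ) T, ∀ t ∈ Set.Icc (0:ℝ) T', ∀ x ∈ M, f t x ∈ W := by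
    intro T' hT' t ht x hx
    by_contra hnot
    have hpos : 0 < Metric.infDist (f t x) W :=
      (hWcl.notMem_iff_infDist_pos hWne).1 hnot
    have hcont : ContinuousOn (fun p : ℝ × EuclideanSpace ℝ (Fin n) =>
        Real.exp (-(C + 1) * p.1) * Metric.infDist (f p.1 p.2) W) (Set.Icc 0 T' ×ˢ M) := by
      apply ContinuousOn.mul
      · fun_prop
      · exact (Metric.continuous_infDist_pt W).comp_continuousOn
          (hfcont.mono (Set.prod_mono (Set.Icc_subset_Icc_right hT'.2.le) le_rfl))
    obtain ⟨⟨t0, x0⟩, ⟨ht0, hx0⟩, hmax⟩ := (isCompact_Icc.prod hMc).exists_isMaxOn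
      ⟨(t, x), ht, hx⟩ hcont
    have hmax' : ∀ s ∈ Set.Icc (0:ℝ) T', ∀ y ∈ M,
        Real.exp (-(C + 1) * s) * Metric.infDist (f s y) W ≤
        Real.exp (-(C + 1) * t0) * Metric.infDist (f t0 x0) W := fun s hs y hy =>
      hmax (show (s, y) ∈ _ from ⟨hs, hy⟩)
    simp only at ht0 hx0
    have hpos0 : 0 < Metric.infDist (f t0 x0) W := by
      have h1 := hmax' t ht x hx
      have h2 : 0 < Real.exp (-(C + 1) * t) * Metric.infDist (f t x) W := by positivity
      exact pos_of_mul_pos_right (h2.trans_le h1) (Real.exp_pos _).le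
    have hnot0 : f t0 x0 ∉ W := (hWcl.notMem_iff_infDist_pos hWne).2 hpos0
    have ht0pos : 0 < t0 := by
      rcases ht0.1.eq_or_lt with h | h
      · exact absurd (h ▸ hreq1 x0 hx0) hnot0
      · exact h
    have ht0I : t0 ∈ Set.Ioo (0:ℝ) T := ⟨ht0pos, ht0.2.trans_lt hT'.2⟩
    have hint : M ∈ nhds x0 := by
      rw [← mem_interior_iff_mem_nhds]
      by_contra h
      exact hnot0 (hbd t0 ht0I x0 ⟨subset_closure hx0, h⟩)
    obtain ⟨ω, hωf, lam, hsup, hnd, hld, hle⟩ := aux_proj_s5 W hWne hWcl hWconv (f t0 x0) hpos0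
    set r := Metric.infDist (f t0 x0) W with hr
    -- spatial comparison
    have hsp : ∀ y ∈ M, ⟪lam, f t0 y⟫ ≤ ⟪lam, f t0 x0⟫ := by
      intro y hy
      have h1 := le_of_mul_le_mul_left (hmax' t0 ht0 y hy) (Real.exp_pos _)
      have h2 := hle (f t0 y)
      have h3 := h2.trans h1
      rw [← hld, inner_sub_right, inner_sub_right] at h3
      linarith
    -- first and second derivatives
    have hkey : ∀ e : EuclideanSpace ℝ (Fin n), ⟪lam, Df t0 x0 e⟫ = 0 ∧
        ⟪lam, D2f t0 x0 e e⟫ ≤ 0 := by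
      intro e
      have hline : ∀ u : ℝ, HasDerivAt (fun u : ℝ => x0 + u • e) e u := by
        intro u
        simpa using ((hasDerivAt_id u).smul_const e).const_add x0
      have htend : Filter.Tendsto (fun u : ℝ => x0 + u • e) (nhds 0) (nhds x0) := by
        have := (hline 0).continuousAt.tendsto
        simpa using this
      have hev : ∀ᶠ u in nhds (0:ℝ), x0 + u • e ∈ interior M :=
        htend.eventually (isOpen_interior.mem_nhds (mem_interior_iff_mem_nhds.2 hint))
      have h1 : ∀ᶠ u in nhds (0:ℝ), HasDerivAt (fun u : ℝ => ⟪lam, f t0 (x0 + u • e)⟫)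
          (⟪lam, Df t0 (x0 + u • e) e⟫) u := by
        filter_upwards [hev] with u hu
        have hF := (hDf t0 ht0I _ (interior_subset hu)).hasFDerivAt
          (mem_interior_iff_mem_nhds.1 hu)
        exact ((innerSL ℝ lam).hasFDerivAt.comp_hasDerivAt u (hF.comp_hasDerivAt u (hline u)))
      have h2 : HasDerivAt (fun u : ℝ => ⟪lam, Df t0 (x0 + u • e) e⟫)
          (⟪lam, D2f t0 x0 e e⟫) 0 := by
        have hF : HasFDerivAt (Df t0) (D2f t0 x0) (x0 + (0:ℝ) • e) := by
          simpa using (hD2f t0 ht0I x0 hx0).hasFDerivAt hint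
        have := (hF.comp_hasDerivAt (0:ℝ) (hline 0)).clm_apply (hasDerivAt_const (0:ℝ) e)
        have := (innerSL ℝ lam).hasFDerivAt.comp_hasDerivAt (0:ℝ) this
        simpa [Function.comp_def] using this
      have h3 : IsLocalMax (fun u : ℝ => ⟪lam, f t0 (x0 + u • e)⟫) 0 := by
        filter_upwards [hev] with u hu
        simpa using hsp _ (interior_subset hu)
      refine ⟨?_, aux_second h1 h2 h3⟩
      simpa using h3.hasDerivAt_eq_zero h1.self_of_nhds
    -- time derivative
    have htime : (C + 1) * r ≤ ⟪lam, f' t0 x0⟫ := by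
      have hd1 : HasDerivAt (fun s => ⟪lam, f s x0 - ω⟫) (⟪lam, f' t0 x0⟫) t0 :=
        (innerSL ℝ lam).hasFDerivAt.comp_hasDerivAt t0 ((hft t0 ht0I x0 hx0).sub_const ω)
      have h := aux_time_s5 (L := C + 1) ht0pos hd1 (fun s hs => by
        rw [hld]
        exact (mul_le_mul_of_nonneg_left (hle (f s x0)) (Real.exp_pos _).le).trans
            (hmax' s ⟨hs.1.le, hs.2.le.trans ht0.2⟩ x0 hx0))
      rwa [hld] at h
    -- use the equation
    have hphi : ⟪lam, f' t0 x0⟫ ≤ ⟪lam, φ t0 x0 (f t0 x0)⟫ := by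
      rw [hPDE t0 ht0I x0 hx0, inner_add_right, inner_add_right, inner_sum, inner_sum]
      have h1 : ∑ j : Fin n, ⟪lam, D2f t0 x0 (EuclideanSpace.single j 1)
          (EuclideanSpace.single j 1)⟫ ≤ 0 := Finset.sum_nonpos fun j _ => (hkey _).2
      have h2 : ∑ j : Fin n, ⟪lam, ζ j t0 x0 • Df t0 x0 (EuclideanSpace.single j 1)⟫ = 0 :=
        Finset.sum_eq_zero fun j _ => by rw [real_inner_smul_right, (hkey _).1, mul_zero]
      linarith
    have hfR := hR' t0 ⟨ht0.1, ht0I.2.le⟩ x0 hx0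
    have hr1 : r ≤ R + ‖w0‖ := by
      have h1 := Metric.infDist_le_dist_of_mem (x := f t0 x0) hw0
      rw [dist_eq_norm] at h1
      linarith [norm_sub_le (f t0 x0) w0]
    have hRnn : 0 ≤ R := (norm_nonneg _).trans hfR
    have hωn : ‖ω‖ ≤ 2 * R + ‖w0‖ := by
      have h1 : ω = f t0 x0 - (f t0 x0 - ω) := by abel
      have h2 := norm_sub_le (f t0 x0) (f t0 x0 - ω)
      rw [← h1] at h2
      linarith
    have hl := hLip t0 ht0I x0 hx0 (f t0 x0)
      (by rw [mem_closedBall_zero_iff]; linarith [norm_nonneg w0]) ω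
      (by rw [mem_closedBall_zero_iff]; exact hωn)
    rw [hnd] at hl
    have h4 := hreq2 t0 ht0I x0 hx0 ω hωf lam hsup
    have h5 := real_inner_le_norm lam (φ t0 x0 (f t0 x0) - φ t0 x0 ω)
    rw [hsup.1, one_mul, inner_sub_right] at h5
    linarith
  have hlt : ∀ t ∈ Set.Ico (0:ℝ) T, ∀ x ∈ M, f t x ∈ W := by
    intro t ht x hx
    exact main ((t + T) / 2) ⟨by linarith [ht.1], by linarith [ht.2]⟩ t
      ⟨ht.1, by linarith [ht.2]⟩ x hx
  intro t ht x hx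
  have hc : ContinuousOn (fun s => f s x) (Set.Icc 0 T) :=
    hfcont.comp (f := fun s : ℝ => (s, x)) (by fun_prop) (fun s hs => ⟨hs, hx⟩)
  have hcl : t ∈ closure (Set.Ico (0:ℝ) T) := by rwa [closure_Ico hT.ne]
  have := (hc t ht).mono Set.Ico_subset_Icc_self |>.mem_closure hcl
    (fun s hs => hlt s hs x hx : Set.MapsTo _ _ W)
  rwa [hWcl.closure_eq] at this
end

section
/- (Invariant sets via nonlinear boundary conditions for parabolic systems.) Assume the setting below, together with Requirement 1 and Requirement 2. Let λ̄ : ℝᵐ → ℝᵐ be any mapping such that λ̄(v) = v − ω(v) for every v ∈ ℝᵐ lying outside of W, where ω(v) is the metric projection of v onto W. If the boundary condition ⟨λ̄(f(t,x)), D_x f(t,x)[ν(x)]⟩ = 0 holds for all (t,x) ∈ (0,T) × ∂M, where D_x f(t,x)[ν(x)] denotes the spatial derivative (taken within M) of the map y ↦ f(t,y) at x applied to ν(x), then f(t,x) lies in W for all (t,x) ∈ [0,T] × M. -/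
open scoped RealInnerProductSpace

lemma aux_first {E : Type*} [NormedAddCommGroup E] [NormedSpace ℝ E] (M : Set E) (h : E → ℝ)
    (D : E →L[ℝ] ℝ) (x e : E) (hD : HasFDerivWithinAt h D M x)
    (hmax : ∀ y ∈ M, h y ≤ h x)
    (he : ∃ ε > (0 : ℝ), ∀ u ∈ Set.Icc (0 : ℝ) ε, x + u • e ∈ M) : D e ≤ 0 := by
  obtain ⟨ε, hε, he⟩ := he
  have hm : IsLocalMaxOn h M x := by
    filter_upwards [self_mem_nhdsWithin] with y hy using hmax y hy
  have h1 : ε • e ∈ posTangentConeAt M x := by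
    apply mem_posTangentConeAt_of_segment_subset
    rw [segment_eq_image']
    rintro _ ⟨θ, hθ, rfl⟩
    have := he (θ * ε) ⟨mul_nonneg hθ.1 hε.le, by nlinarith [hθ.2]⟩
    simpa [smul_smul] using this
  have h2 := hm.hasFDerivWithinAt_nonpos hD h1
  rw [map_smul, smul_eq_mul] at h2
  by_contra hc
  push Not at hc
  nlinarith [mul_pos hε hc]

lemma aux_second_s7 {E : Type*} [NormedAddCommGroup E] [NormedSpace ℝ E] (M : Set E) (h : E → ℝ)
    (D : E → E →L[ℝ] ℝ) (D2 : E →L[ℝ] E →L[ℝ] ℝ) (x e : E) (hx : x ∈ M)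
    (hD : ∀ y ∈ M, HasFDerivWithinAt h (D y) M y)
    (hD2 : HasFDerivWithinAt D D2 M x)
    (hmax : ∀ y ∈ M, h y ≤ h x)
    (h0 : D x e = 0)
    (he : ∃ ε > (0 : ℝ), ∀ u ∈ Set.Icc (0 : ℝ) ε, x + u • e ∈ M) : D2 e e ≤ 0 := by
  obtain ⟨ε, hε, he⟩ := he
  by_contra hc
  push Not at hc
  have hline : ∀ u : ℝ, HasDerivWithinAt (fun u : ℝ => x + u • e) e (Set.Icc 0 ε) u := by
    intro u
    have := ((hasDerivAt_id u).smul_const e).const_add x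
    simpa using this.hasDerivWithinAt
  have hk : ∀ u ∈ Set.Icc (0 : ℝ) ε,
      HasDerivWithinAt (fun u : ℝ => h (x + u • e)) (D (x + u • e) e) (Set.Icc 0 ε) u := by
    intro u hu
    exact (hD _ (he u hu)).comp_hasDerivWithinAt u (hline u) (fun v hv => he v hv)
  have hk2 : HasDerivWithinAt (fun u : ℝ => D (x + u • e) e) (D2 e e) (Set.Icc 0 ε) 0 := by
    have h1 : HasFDerivWithinAt D D2 M (x + (0 : ℝ) • e) := by simpa using hD2
    have h2 := h1.comp_hasDerivWithinAt 0 (hline 0) (fun v hv => he v hv)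
    have h3 := h2.clm_apply (hasDerivWithinAt_const (0 : ℝ) (Set.Icc 0 ε) e)
    simpa using h3
  rw [hasDerivWithinAt_iff_tendsto_slope] at hk2
  have hev := hk2.eventually (lt_mem_nhds hc)
  have hset : Set.Icc (0 : ℝ) ε \ {0} = Set.Ioc 0 ε := by
    ext u
    simp only [Set.mem_diff, Set.mem_Icc, Set.mem_singleton_iff, Set.mem_Ioc]
    constructor
    · rintro ⟨⟨h1, h2⟩, h3⟩
      exact ⟨lt_of_le_of_ne h1 (Ne.symm h3), h2⟩
    · rintro ⟨h1, h2⟩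
      exact ⟨⟨h1.le, h2⟩, h1.ne'⟩
  rw [hset, nhdsWithin_Ioc_eq_nhdsGT hε] at hev
  obtain ⟨δ, hδ, hδ2⟩ := (mem_nhdsGT_iff_exists_Ioo_subset' hε).1 hev
  have hδ0 : (0 : ℝ) < δ := hδ
  set η := min δ ε with hη
  have hη0 : 0 < η := lt_min hδ0 hε
  have hsub : Set.Icc (0 : ℝ) η ⊆ Set.Icc 0 ε := Set.Icc_subset_Icc_right (min_le_right _ _)
  have hmono : StrictMonoOn (fun u : ℝ => h (x + u • e)) (Set.Icc 0 η) := by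
    apply strictMonoOn_of_deriv_pos (convex_Icc _ _)
    · intro u hu
      exact ((hk u (hsub hu)).continuousWithinAt).mono hsub
    · intro u hu
      rw [interior_Icc] at hu
      have h1 : HasDerivAt (fun u : ℝ => h (x + u • e)) (D (x + u • e) e) u :=
        (hk u (hsub ⟨hu.1.le, hu.2.le⟩)).hasDerivAt
          (Icc_mem_nhds hu.1 (lt_of_lt_of_le hu.2 (min_le_right _ _)))
      rw [h1.deriv]
      have h2 : 0 < slope (fun u : ℝ => D (x + u • e) e) 0 u :=
        hδ2 ⟨hu.1, lt_of_lt_of_le hu.2 (min_le_left _ _)⟩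
      rw [slope_def_field] at h2
      simp only [zero_smul, add_zero, h0, sub_zero] at h2
      exact (div_pos_iff_of_pos_right hu.1).1 h2
  have h5 := hmono ⟨le_rfl, hη0.le⟩ ⟨hη0.le, le_rfl⟩ hη0
  have h6 := hmax _ (he η (hsub ⟨hη0.le, le_rfl⟩))
  simp only [zero_smul, add_zero] at h5
  linarith

lemma aux_limit {E : Type*} [NormedAddCommGroup E] [InnerProductSpace ℝ E] (ν : E)
    (hν : ‖ν‖ = 1) (F : E → ℝ) (hF : Continuous F)
    (h : ∀ e : E, ⟪e, ν⟫ < 0 → F e ≤ 0) (e : E) (he : ⟪e, ν⟫ ≤ 0) : F e ≤ 0 := by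
  have hc : Filter.Tendsto (fun s : ℝ => F (e - s • ν)) (nhdsWithin 0 (Set.Ioi 0)) (nhds (F e)) := by
    have : Continuous (fun s : ℝ => F (e - s • ν)) := by fun_prop
    have h2 := this.tendsto 0
    simp only [zero_smul, sub_zero] at h2
    exact h2.mono_left nhdsWithin_le_nhds
  refine le_of_tendsto hc ?_
  filter_upwards [self_mem_nhdsWithin] with s hs
  apply h
  rw [inner_sub_left, real_inner_smul_left, real_inner_self_eq_norm_sq, hν]
  have : (0 : ℝ) < s := hs
  linarith

/-- at a spatial maximum, gradient vanishes and pure second derivatives are nonpositive -/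
lemma aux_max {E : Type*} [NormedAddCommGroup E] [InnerProductSpace ℝ E] (M : Set E)
    (hMc : IsClosed M) (h : E → ℝ)
    (D : E → E →L[ℝ] ℝ) (D2 : E →L[ℝ] E →L[ℝ] ℝ) (x : E) (hx : x ∈ M)
    (hD : ∀ y ∈ M, HasFDerivWithinAt h (D y) M y)
    (hD2 : HasFDerivWithinAt D D2 M x)
    (hmax : ∀ y ∈ M, h y ≤ h x)
    (ν : E → E) (hν1 : ∀ x ∈ frontier M, ‖ν x‖ = 1)
    (hν2 : ∀ x ∈ frontier M, ∀ e : E, ⟪e, ν x⟫ < 0 →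
      ∃ ε > (0 : ℝ), ∀ u ∈ Set.Icc (0 : ℝ) ε, x + u • e ∈ M)
    (hbd : x ∈ frontier M → D x (ν x) = 0) :
    (∀ e, D x e = 0) ∧ ∀ e, D2 e e ≤ 0 := by
  by_cases hfr : x ∈ frontier M
  · have hn := hν1 x hfr
    have hF1 := aux_limit (ν x) hn (fun e => D x e) (D x).continuous
      (fun e he => aux_first M h (D x) x e (hD x hx) hmax (hν2 x hfr e he))
    have hz : ∀ e, D x e = 0 := by
      intro e
      have hdec : D x e = D x (e - ⟪e, ν x⟫ • ν x) := by
        rw [map_sub, map_smul, hbd hfr]; simp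
      have hperp : ⟪e - ⟪e, ν x⟫ • ν x, ν x⟫ = 0 := by
        rw [inner_sub_left, real_inner_smul_left, real_inner_self_eq_norm_sq, hn]; ring
      have h1 := hF1 (e - ⟪e, ν x⟫ • ν x) hperp.le
      have h2 := hF1 (-(e - ⟪e, ν x⟫ • ν x)) (by rw [inner_neg_left, hperp]; simp)
      simp only [map_neg] at h2
      rw [hdec]
      linarith
    refine ⟨hz, ?_⟩
    have hF2 := aux_limit (ν x) hn (fun e => D2 e e) (by fun_prop)
      (fun e he => aux_second_s7 M h D D2 x e hx hD hD2 hmax (hz e) (hν2 x hfr e he))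
    intro e
    rcases le_total ⟪e, ν x⟫ 0 with h1 | h1
    · exact hF2 e h1
    · have := hF2 (-e) (by rw [inner_neg_left]; linarith)
      simpa using this
  · have hint : x ∈ interior M := by
      by_contra hc
      exact hfr ⟨subset_closure hx, hc⟩
    have hP : ∀ e : E, ∃ ε > (0 : ℝ), ∀ u ∈ Set.Icc (0 : ℝ) ε, x + u • e ∈ M := by
      intro e
      have hcont : Continuous (fun u : ℝ => x + u • e) := by fun_prop
      have hnb : (fun u : ℝ => x + u • e) ⁻¹' M ∈ nhds (0 : ℝ) := by
        apply hcont.continuousAt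
        simpa using mem_interior_iff_mem_nhds.1 hint
      obtain ⟨ε, hε, hb⟩ := Metric.mem_nhds_iff.1 hnb
      refine ⟨ε / 2, by positivity, fun u hu => hb ?_⟩
      rw [Metric.mem_ball, Real.dist_eq, sub_zero, abs_of_nonneg hu.1]
      linarith [hu.2]
    have hz : ∀ e, D x e = 0 := by
      intro e
      have h1 := aux_first M h (D x) x e (hD x hx) hmax (hP e)
      have h2 := aux_first M h (D x) x (-e) (hD x hx) hmax (hP (-e))
      simp only [map_neg] at h2
      linarith
    exact ⟨hz, fun e => aux_second_s7 M h D D2 x e hx hD hD2 hmax (hz e) (hP e)⟩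

/-- Invariant sets via nonlinear boundary conditions for parabolic systems. -/
theorem stmt_7
    (n m : ℕ)
    -- M is the closure of a bounded domain (bounded connected open set) in ℝⁿ
    (Ω : Set (EuclideanSpace ℝ (Fin n)))
    (hΩopen : IsOpen Ω) (hΩconn : IsConnected Ω) (hΩbdd : Bornology.IsBounded Ω)
    (M : Set (EuclideanSpace ℝ (Fin n))) (hM : M = closure Ω)
    (T : ℝ) (hT : 0 < T)
    -- W is a nonempty closed convex subset of ℝᵐ
    (W : Set (EuclideanSpace ℝ (Fin m)))
    (hWne : W.Nonempty) (hWcl : IsClosed W) (hWconv : Convex ℝ W)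
    -- φ is Lipschitz in v, uniformly in (t,x), on every compact set U ⊆ ℝᵐ
    (φ : ℝ → EuclideanSpace ℝ (Fin n) → EuclideanSpace ℝ (Fin m) →
      EuclideanSpace ℝ (Fin m))
    (hφ : ∀ U : Set (EuclideanSpace ℝ (Fin m)), IsCompact U → ∃ C > (0 : ℝ),
      ∀ t ∈ Set.Ioo (0 : ℝ) T, ∀ x ∈ M, ∀ v₁ ∈ U, ∀ v₂ ∈ U,
        ‖φ t x v₁ - φ t x v₂‖ ≤ C * ‖v₁ - v₂‖)
    -- drift coefficients
    (ζ : Fin n → ℝ → EuclideanSpace ℝ (Fin n) → ℝ)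
    -- the solution f, its time derivative f', its first and second spatial
    -- derivatives (taken within M)
    (f f' : ℝ → EuclideanSpace ℝ (Fin n) → EuclideanSpace ℝ (Fin m))
    (Df : ℝ → EuclideanSpace ℝ (Fin n) →
      (EuclideanSpace ℝ (Fin n) →L[ℝ] EuclideanSpace ℝ (Fin m)))
    (D2f : ℝ → EuclideanSpace ℝ (Fin n) →
      (EuclideanSpace ℝ (Fin n) →L[ℝ]
        (EuclideanSpace ℝ (Fin n) →L[ℝ] EuclideanSpace ℝ (Fin m))))
    (hfcont : ContinuousOn (fun p : ℝ × EuclideanSpace ℝ (Fin n) => f p.1 p.2)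
      (Set.Icc 0 T ×ˢ M))
    (hft : ∀ t ∈ Set.Ioo (0 : ℝ) T, ∀ x ∈ M,
      HasDerivAt (fun s => f s x) (f' t x) t)
    (hftcont : ∀ x ∈ M, ContinuousOn (fun t => f' t x) (Set.Ioo (0 : ℝ) T))
    (hDf : ∀ t ∈ Set.Ioo (0 : ℝ) T, ∀ x ∈ M,
      HasFDerivWithinAt (f t) (Df t x) M x)
    (hD2f : ∀ t ∈ Set.Ioo (0 : ℝ) T, ∀ x ∈ M,
      HasFDerivWithinAt (Df t) (D2f t x) M x)
    -- the parabolic system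
    (hPDE : ∀ t ∈ Set.Ioo (0 : ℝ) T, ∀ x ∈ M,
      f' t x =
        (∑ j : Fin n, D2f t x (EuclideanSpace.single j 1) (EuclideanSpace.single j 1))
        + (∑ j : Fin n, ζ j t x • Df t x (EuclideanSpace.single j 1))
        + φ t x (f t x))
    -- the outward unit normal on the boundary of M
    (ν : EuclideanSpace ℝ (Fin n) → EuclideanSpace ℝ (Fin n))
    (hν1 : ∀ x ∈ frontier M, ‖ν x‖ = 1)
    (hν2 : ∀ x ∈ frontier M, ∀ e : EuclideanSpace ℝ (Fin n), ⟪e, ν x⟫ < 0 →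
      ∃ ε > (0 : ℝ), ∀ u ∈ Set.Icc (0 : ℝ) ε, x + u • e ∈ M)
    -- Requirement 1: the initial value lies in W
    (hreq1 : ∀ x ∈ M, f 0 x ∈ W)
    -- Requirement 2: φ points into W on the boundary of W
    (hreq2 : ∀ t ∈ Set.Ioo (0 : ℝ) T, ∀ x ∈ M, ∀ ω ∈ frontier W,
      ∀ lam, IsSupportingVector W ω lam → ⟪lam, φ t x ω⟫ ≤ 0)
    -- λ̄ agrees with v ↦ v − ω(v) outside of W, where ω(v) is the metric
    -- projection of v onto W
    (lamBar : EuclideanSpace ℝ (Fin m) → EuclideanSpace ℝ (Fin m))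
    (hlamBar : ∀ v ∉ W, ∀ w ∈ W, dist v w = Metric.infDist v W → lamBar v = v - w)
    -- nonlinear boundary condition: ⟪λ̄(f(t,x)), D_x f(t,x)[ν(x)]⟫ = 0 on (0,T) × ∂M
    (hbd : ∀ t ∈ Set.Ioo (0 : ℝ) T, ∀ x ∈ frontier M,
      ⟪lamBar (f t x), Df t x (ν x)⟫ = 0) :
    -- conclusion: f lies in W everywhere on [0,T] × M
    ∀ t ∈ Set.Icc (0 : ℝ) T, ∀ x ∈ M, f t x ∈ W := by
  have hMc : IsClosed M := hM ▸ isClosed_closure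
  have hMk : IsCompact M := by
    rw [hM]; exact hΩbdd.isCompact_closure
  -- projection
  have hproj : ∀ v, ∃ w ∈ W, ‖v - w‖ = Metric.infDist v W ∧ ∀ σ ∈ W, ⟪v - w, σ - w⟫ ≤ 0 := by
    intro v
    obtain ⟨w, hw, hw2⟩ := exists_norm_eq_iInf_of_complete_convex hWne hWcl.isComplete hWconv v
    refine ⟨w, hw, ?_, (norm_eq_iInf_iff_real_inner_le_zero hWconv hw).1 hw2⟩
    rw [hw2, Metric.infDist_eq_iInf]
    simp only [dist_eq_norm]
  -- bound
  have hK : IsCompact (Set.Icc 0 T ×ˢ M) := isCompact_Icc.prod hMk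
  obtain ⟨R, hR⟩ := hK.exists_bound_of_continuousOn hfcont
  obtain ⟨w0, hw0⟩ := hWne
  obtain ⟨C, hC, hLip⟩ := hφ (Metric.closedBall 0 (2 * R + ‖w0‖)) (isCompact_closedBall _ _)
  have main : ∀ t ∈ Set.Ico (0 : ℝ) T, ∀ x ∈ M, f t x ∈ W := by
    intro t1 ht1 x1 hx1
    by_contra hnot
    have hsub : Set.Icc 0 t1 ×ˢ M ⊆ Set.Icc 0 T ×ˢ M :=
      Set.prod_mono (Set.Icc_subset_Icc_right ht1.2.le) le_rfl
    have hGc : ContinuousOn (fun p : ℝ × EuclideanSpace ℝ (Fin n) =>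
        Real.exp (-(C + 1) * p.1) * Metric.infDist (f p.1 p.2) W) (Set.Icc 0 t1 ×ˢ M) := by
      apply ContinuousOn.mul
      · fun_prop
      · exact (Metric.continuous_infDist_pt W).comp_continuousOn (hfcont.mono hsub)
    obtain ⟨⟨t0, x0⟩, ⟨ht0, hx0⟩, hmaxG⟩ := (isCompact_Icc.prod hMk).exists_isMaxOn
      ⟨(t1, x1), ⟨ht1.1, le_rfl⟩, hx1⟩ hGc
    have hmaxG' : ∀ s ∈ Set.Icc 0 t1, ∀ y ∈ M,
        Real.exp (-(C + 1) * s) * Metric.infDist (f s y) W ≤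
        Real.exp (-(C + 1) * t0) * Metric.infDist (f t0 x0) W :=
      fun s hs y hy => hmaxG (show (s, y) ∈ Set.Icc 0 t1 ×ˢ M from ⟨hs, hy⟩)
    simp only at ht0 hx0
    have hpos1 : 0 < Metric.infDist (f t1 x1) W :=
      (hWcl.notMem_iff_infDist_pos ⟨w0, hw0⟩).1 hnot
    have hpos : 0 < Metric.infDist (f t0 x0) W := by
      have h1 := hmaxG' t1 ⟨ht1.1, le_rfl⟩ x1 hx1
      have h2 := mul_pos (Real.exp_pos (-(C + 1) * t1)) hpos1
      exact (pos_iff_pos_of_mul_pos (lt_of_lt_of_le h2 h1)).1 (Real.exp_pos _)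
    have hnotW : f t0 x0 ∉ W := (hWcl.notMem_iff_infDist_pos ⟨w0, hw0⟩).2 hpos
    have ht0pos : 0 < t0 := by
      rcases ht0.1.eq_or_lt with h | h
      · exact absurd (h ▸ hreq1 x0 hx0) hnotW
      · exact h
    have ht0T : t0 ∈ Set.Ioo 0 T := ⟨ht0pos, lt_of_le_of_lt ht0.2 ht1.2⟩
    obtain ⟨ω, hω, hωd, hωin⟩ := hproj (f t0 x0)
    set lam := f t0 x0 - ω with hlam
    have hlampos : 0 < ‖lam‖ := by rw [hωd]; exact hpos
    -- the linear functional is dominated by the distance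
    have hdom : ∀ v, ⟪lam, v - ω⟫ ≤ ‖lam‖ * Metric.infDist v W := by
      intro v
      obtain ⟨w, hw, hwd, -⟩ := hproj v
      have h1 : ⟪lam, v - ω⟫ = ⟪lam, v - w⟫ + ⟪lam, w - ω⟫ := by
        rw [← inner_add_right]; congr 1; abel
      have h2 := real_inner_le_norm lam (v - w)
      have h3 := hωin w hw
      rw [hwd] at h2
      linarith
    have heq : ⟪lam, f t0 x0 - ω⟫ = ‖lam‖ * Metric.infDist (f t0 x0) W := by
      rw [← hωd, ← hlam, real_inner_self_eq_norm_sq]; ring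
    have hq : ∀ s ∈ Set.Icc 0 t1, ∀ y ∈ M,
        Real.exp (-(C + 1) * s) * ⟪lam, f s y - ω⟫ ≤
        Real.exp (-(C + 1) * t0) * ⟪lam, f t0 x0 - ω⟫ := by
      intro s hs y hy
      have h1 := mul_le_mul_of_nonneg_left (hdom (f s y)) (Real.exp_pos (-(C + 1) * s)).le
      have h2 := mul_le_mul_of_nonneg_left (hmaxG' s hs y hy) hlampos.le
      rw [heq]
      linarith
    -- space
    have hmaxx : ∀ y ∈ M, innerSL ℝ lam (f t0 y) ≤ innerSL ℝ lam (f t0 x0) := by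
      intro y hy
      have h1 := le_of_mul_le_mul_left (hq t0 ht0 y hy) (Real.exp_pos _)
      rw [inner_sub_right, inner_sub_right] at h1
      simp only [innerSL_apply_apply]
      linarith
    have hlamb : lamBar (f t0 x0) = lam :=
      hlamBar _ hnotW ω hω (by rw [dist_eq_norm]; exact hωd)
    let P : (EuclideanSpace ℝ (Fin n) →L[ℝ] EuclideanSpace ℝ (Fin m)) →L[ℝ]
        (EuclideanSpace ℝ (Fin n) →L[ℝ] ℝ) :=
      ContinuousLinearMap.compL ℝ _ _ _ (innerSL ℝ lam)
    have hspace := aux_max M hMc (fun y => innerSL ℝ lam (f t0 y))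
      (fun y => P (Df t0 y)) (P.comp (D2f t0 x0)) x0 hx0
      (fun y hy => (innerSL ℝ lam).hasFDerivAt.comp_hasFDerivWithinAt y (hDf t0 ht0T y hy))
      (P.hasFDerivAt.comp_hasFDerivWithinAt x0 (hD2f t0 ht0T x0 hx0))
      hmaxx ν hν1 hν2
      (fun hfr => by
        have := hbd t0 ht0T x0 hfr
        rw [hlamb] at this
        simpa [P] using this)
    have hgrad : ∀ e, ⟪lam, Df t0 x0 e⟫ = 0 := fun e => by simpa [P] using hspace.1 e
    have hlap : ∀ e, ⟪lam, D2f t0 x0 e e⟫ ≤ 0 := fun e => by simpa [P] using hspace.2 e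
    -- time
    have htime : (C + 1) * ‖lam‖ ^ 2 ≤ ⟪lam, f' t0 x0⟫ := by
      have hd1 : HasDerivAt (fun s => ⟪lam, f s x0 - ω⟫) ⟪lam, f' t0 x0⟫ t0 := by
        have := (innerSL ℝ lam).hasFDerivAt.comp_hasDerivAt t0
          ((hft t0 ht0T x0 hx0).sub_const ω)
        simpa [Function.comp_def] using this
      have hd2 : HasDerivAt (fun s : ℝ => Real.exp (-(C + 1) * s))
          (Real.exp (-(C + 1) * t0) * (-(C + 1))) t0 := by
        have := ((hasDerivAt_id t0).const_mul (-(C + 1))).exp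
        simpa using this
      have hd3 := (hd2.mul hd1).hasFDerivAt.hasFDerivWithinAt (s := Set.Icc 0 t1)
      have h4 := aux_first (Set.Icc 0 t1) _ _ t0 (-1) hd3 (fun s hs => hq s hs x0 hx0)
        ⟨t0, ht0pos, fun u hu => by
          simp only [smul_eq_mul, Set.mem_Icc]
          constructor <;> linarith [hu.1, hu.2, ht0.2]⟩
      simp only [ContinuousLinearMap.toSpanSingleton_apply, smul_eq_mul] at h4
      rw [← hlam, real_inner_self_eq_norm_sq] at h4
      have h5 : 0 ≤ Real.exp (-(C + 1) * t0) * (⟪lam, f' t0 x0⟫ - (C + 1) * ‖lam‖ ^ 2) := by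
        linarith
      have h6 := nonneg_of_mul_nonneg_right h5 (Real.exp_pos _)
      linarith
    -- reaction term
    have hRf : ‖f t0 x0‖ ≤ R := hR (t0, x0) ⟨⟨ht0pos.le, ht0T.2.le⟩, hx0⟩
    have hωn : ‖ω‖ ≤ 2 * R + ‖w0‖ := by
      have h1 : Metric.infDist (f t0 x0) W ≤ dist (f t0 x0) w0 := Metric.infDist_le_dist_of_mem hw0
      rw [dist_eq_norm] at h1
      have h2 := norm_sub_le (f t0 x0) w0
      have h3 : ω = f t0 x0 - lam := by rw [hlam]; abel
      have h4 := norm_sub_le (f t0 x0) lam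
      rw [← h3] at h4
      linarith
    have hL := hLip t0 ht0T x0 hx0 (f t0 x0)
      (by rw [mem_closedBall_zero_iff]; linarith [norm_nonneg w0, norm_nonneg (f t0 x0)])
      ω (by rw [mem_closedBall_zero_iff]; exact hωn)
    have hωfr : ω ∈ frontier W := by
      refine ⟨subset_closure hω, fun hint => ?_⟩
      have hcont : Continuous (fun u : ℝ => ω + u • lam) := by fun_prop
      have hnb : (fun u : ℝ => ω + u • lam) ⁻¹' W ∈ nhds (0 : ℝ) := by
        apply hcont.continuousAt
        simpa using mem_interior_iff_mem_nhds.1 hint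
      obtain ⟨ε, hε, hb⟩ := Metric.mem_nhds_iff.1 hnb
      have hmem : ω + (ε / 2) • lam ∈ W := hb (by
        rw [Metric.mem_ball, Real.dist_eq, sub_zero, abs_of_pos (by positivity)]; linarith)
      have h1 := hωin _ hmem
      rw [add_sub_cancel_left, real_inner_smul_right, real_inner_self_eq_norm_sq] at h1
      have : 0 < ε / 2 * ‖lam‖ ^ 2 := by positivity
      linarith
    have hsupp : IsSupportingVector W ω (‖lam‖⁻¹ • lam) := by
      refine ⟨norm_smul_inv_norm (𝕜 := ℝ) (norm_pos_iff.1 hlampos), fun σ hσ => ?_⟩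
      rw [real_inner_smul_left, real_inner_smul_left]
      apply mul_le_mul_of_nonneg_left _ (by positivity)
      have := hωin σ hσ
      rw [inner_sub_right] at this
      linarith
    have hφω : ⟪lam, φ t0 x0 ω⟫ ≤ 0 := by
      have h1 := hreq2 t0 ht0T x0 hx0 ω hωfr _ hsupp
      rw [real_inner_smul_left] at h1
      by_contra hc
      push Not at hc
      have := mul_pos (inv_pos.2 hlampos) hc
      linarith
    have hφf : ⟪lam, φ t0 x0 (f t0 x0)⟫ ≤ C * ‖lam‖ ^ 2 := by
      have h1 : ⟪lam, φ t0 x0 (f t0 x0)⟫ = ⟪lam, φ t0 x0 (f t0 x0) - φ t0 x0 ω⟫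
          + ⟪lam, φ t0 x0 ω⟫ := by
        rw [← inner_add_right]; congr 1; abel
      have h2 := real_inner_le_norm lam (φ t0 x0 (f t0 x0) - φ t0 x0 ω)
      have h3 := mul_le_mul_of_nonneg_left hL hlampos.le
      rw [← hlam] at h3
      nlinarith
    have hfin : ⟪lam, f' t0 x0⟫ ≤ C * ‖lam‖ ^ 2 := by
      rw [hPDE t0 ht0T x0 hx0, inner_add_right, inner_add_right, inner_sum, inner_sum]
      have h1 := Finset.sum_nonpos (s := Finset.univ) (fun (j : Fin n) _ =>
        hlap (EuclideanSpace.single j 1))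
      have h2 : ∑ j : Fin n, ⟪lam, ζ j t0 x0 • Df t0 x0 (EuclideanSpace.single j 1)⟫ = 0 :=
        Finset.sum_eq_zero (fun j _ => by rw [real_inner_smul_right, hgrad, mul_zero])
      rw [h2]
      linarith
    have : 0 < ‖lam‖ ^ 2 := by positivity
    nlinarith
  intro t ht x hx
  rcases ht.2.eq_or_lt with h | h
  · subst h
    have hc : ContinuousOn (fun s => f s x) (Set.Icc 0 t) :=
      hfcont.comp (f := fun s : ℝ => (s, x)) (by fun_prop) (fun s hs => ⟨hs, hx⟩)
    have hc2 := (hc t ⟨hT.le, le_rfl⟩).mono (Set.Ico_subset_Icc_self)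
    have hcl : t ∈ closure (Set.Ico 0 t) := by
      rw [closure_Ico hT.ne]; exact ⟨hT.le, le_rfl⟩
    have := hc2.mem_closure hcl (fun s hs => main s hs x hx)
    rwa [hWcl.closure_eq] at this
  · exact main t ⟨ht.1, h⟩ x hx
end

section
/- Let W be a nonempty closed convex subset of ℝᵐ and let v ∈ ℝᵐ satisfy dist_W v > 0, where dist_W v is the Euclidean distance from v to W. Then dist_W v = sup_{ω ∈ ∂W} sup_{λ ∈ S_ω W} ⟨λ, v − ω⟩. -/
open scoped RealInnerProductSpace

theorem stmt_8 (m : ℕ) (W : Set (EuclideanSpace ℝ (Fin m)))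
    (hWne : W.Nonempty) (hWcl : IsClosed W) (hWconv : Convex ℝ W)
    (v : EuclideanSpace ℝ (Fin m)) (hv : 0 < Metric.infDist v W) :
    Metric.infDist v W =
      sSup {r : ℝ | ∃ ω ∈ frontier W, ∃ lam,
        IsSupportingVector W ω lam ∧ r = ⟪lam, v - ω⟫} := by
  obtain ⟨ω, hω, hd⟩ := hWcl.exists_infDist_eq_dist hWne v
  have hmin : ‖v - ω‖ = ⨅ w : W, ‖v - w‖ := by
    rw [← dist_eq_norm, ← hd, Metric.infDist_eq_iInf]
    simp only [dist_eq_norm]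
  have hin := (norm_eq_iInf_iff_real_inner_le_zero hWconv hω).1 hmin
  rw [dist_eq_norm] at hd
  have hpos : 0 < ‖v - ω‖ := hd ▸ hv
  symm
  apply IsGreatest.csSup_eq
  constructor
  · refine ⟨ω, ?_, (‖v - ω‖)⁻¹ • (v - ω), ⟨?_, ?_⟩, ?_⟩
    · rw [hWcl.frontier_eq]
      refine ⟨hω, fun hi => ?_⟩
      have hc : Filter.Tendsto (fun t : ℝ => ω + t • (v - ω)) (nhdsWithin 0 (Set.Ioi 0)) (nhds ω) := by
        have : Continuous (fun t : ℝ => ω + t • (v - ω)) := by fun_prop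
        have h := this.tendsto 0
        simp only [zero_smul, add_zero] at h
        exact h.mono_left nhdsWithin_le_nhds
      have h1 := hc.eventually (mem_interior_iff_mem_nhds.1 hi)
      obtain ⟨t, ht, ht0⟩ := (h1.and self_mem_nhdsWithin).exists
      have h2 := hin _ ht
      rw [add_sub_cancel_left, real_inner_smul_right, real_inner_self_eq_norm_sq] at h2
      have : 0 < t * ‖v - ω‖ ^ 2 := mul_pos ht0 (by positivity)
      linarith
    · rw [norm_smul, norm_inv, norm_norm, inv_mul_cancel₀ hpos.ne']
    · intro σ hσ
      rw [real_inner_smul_left, real_inner_smul_left]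
      have := hin σ hσ
      rw [inner_sub_right] at this
      exact mul_le_mul_of_nonneg_left (by linarith) (by positivity)
    · rw [real_inner_smul_left, real_inner_self_eq_norm_sq, hd]
      field_simp
  · rintro r ⟨ω', -, lam, ⟨hl, hs⟩, rfl⟩
    have h1 := hs ω hω
    have h2 := real_inner_le_norm lam (v - ω)
    rw [hl, one_mul, inner_sub_right] at h2
    rw [hd, inner_sub_right]
    linarith
end

section
/- Let W be a nonempty closed convex subset of ℝᵐ, let v ∈ ℝᵐ lie outside of W, let ω ∈ ∂W, and let λ ∈ S_ω W be a supporting vector for W at ω. If ⟨λ, v − ω⟩ = dist_W v, where dist_W v is the Euclidean distance from v to W, then λ = λ(v)/‖λ(v)‖, where λ(v) = v − ω(v) and ω(v) is the metric projection of v onto W; in particular λ is a supporting vector for W at ω(v). -/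
open scoped RealInnerProductSpace

theorem stmt_10 (m : ℕ) (W : Set (EuclideanSpace ℝ (Fin m)))
    (hWne : W.Nonempty) (hWcl : IsClosed W) (hWconv : Convex ℝ W)
    (v : EuclideanSpace ℝ (Fin m)) (hv : v ∉ W)
    (ω : EuclideanSpace ℝ (Fin m)) (hω : ω ∈ frontier W)
    (lam : EuclideanSpace ℝ (Fin m)) (hlam : IsSupportingVector W ω lam)
    (heq : ⟪lam, v - ω⟫ = Metric.infDist v W)
    (ωv : EuclideanSpace ℝ (Fin m)) (hωv : ωv ∈ W)
    (hclosest : ∀ w ∈ W, dist v ωv ≤ dist v w) :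
    lam = ‖v - ωv‖⁻¹ • (v - ωv) ∧ IsSupportingVector W ωv lam := by
  obtain ⟨h1, h2⟩ := hlam
  have hD : Metric.infDist v W = ‖v - ωv‖ := by
    rw [← dist_eq_norm]
    exact le_antisymm (Metric.infDist_le_dist_of_mem hωv)
      ((Metric.le_infDist hWne).2 (fun {w} hw => hclosest w hw))
  have hle : ⟪lam, v - ωv⟫ ≤ ‖lam‖ * ‖v - ωv‖ := real_inner_le_norm _ _
  have h3 := h2 ωv hωv
  rw [hD] at heq
  rw [h1, one_mul] at hle
  rw [inner_sub_right] at heq hle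
  have h4 : ⟪lam, ωv⟫ = ⟪lam, ω⟫ := by linarith
  have h5 : ⟪lam, v - ωv⟫ = ‖lam‖ * ‖v - ωv‖ := by
    rw [inner_sub_right, h1, h4]; linarith
  have hne : ‖v - ωv‖ ≠ 0 := by
    rw [norm_ne_zero_iff, sub_ne_zero]
    rintro rfl
    exact hv hωv
  refine ⟨?_, h1, fun σ hσ => h4 ▸ h2 σ hσ⟩
  have h6 := inner_eq_norm_mul_iff_real.1 h5
  rw [h1, one_smul] at h6
  rw [eq_inv_smul_iff₀ hne]
  exact h6
end
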